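/- (Klein–Hurwitz) The function y(τ) = η(τ)^{−2} solves the modular linear differential equation y''(τ) + (π²/36) E4(τ) y(τ) = 0 for all τ in the upper half-plane. -/

import Mathlib

open Complex Filter Topology

noncomputable section

/-- The nome `q = e^{2πiτ}`. -/
def qq (τ : ℂ) : ℂ := Complex.exp (2 * Real.pi * Complex.I * τ)

/-- The Eisenstein series `E₄(τ) = 1 + 240 Σ_{n≥1} σ₃(n) qⁿ`. -/
def E4 (τ : ℂ) : ℂ := 1 + 240 * ∑' n : ℕ, (∑ d ∈ (n + 1).divisors, (d : ℂ) ^ 3) * qq τ ^ (n + 1)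

/-- The Eisenstein series `E₆(τ) = 1 − 504 Σ_{n≥1} σ₅(n) qⁿ`. -/
def E6 (τ : ℂ) : ℂ := 1 - 504 * ∑' n : ℕ, (∑ d ∈ (n + 1).divisors, (d : ℂ) ^ 5) * qq τ ^ (n + 1)

/-- The normalized elliptic modular function `J = E₄³ / (E₄³ − E₆²)`. -/
def J (τ : ℂ) : ℂ := E4 τ ^ 3 / (E4 τ ^ 3 - E6 τ ^ 2)

/-- The Dedekind eta function `η(τ) = e^{πiτ/12} ∏_{n≥1} (1 − qⁿ)`. -/
def dedekindEta (τ : ℂ) : ℂ := Complex.exp (Real.pi * Complex.I * τ / 12) * ∏' n : ℕ, (1 - qq τ ^ (n + 1))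

/-- The elliptic point `ρ = e^{2πi/3}`. -/
def rho : ℂ := Complex.exp (2 * Real.pi * Complex.I / 3)

open scoped MatrixGroups ModularForm Manifold CongruenceSubgroup Derivative

open UpperHalfPlane hiding I
open Derivative

/-- A function on `ℍ` with a `q`-expansion tends to its constant coefficient at `i∞`. -/
lemma tendsto_atImInfty_of_hasSum_qExpansion {f : ℍ → ℂ} {c : ℕ → ℂ}
    (hf : ∀ τ : ℍ, HasSum (fun m ↦ c m • Function.Periodic.qParam 1 (τ : ℂ) ^ m) (f τ)) :
    Tendsto f atImInfty (𝓝 (c 0)) := by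
  have hne (τ : ℍ) : Function.Periodic.qParam 1 (τ : ℂ) ≠ 0 :=
    Function.Periodic.qParam_ne_zero _
  have hbdd : IsBoundedAtImInfty
      fun τ : ℍ ↦ (f τ - c 0) / Function.Periodic.qParam 1 (τ : ℂ) := by
    refine isBoundedAtImInfty_of_hasSum_qExpansion (h := 1) (c := fun m ↦ c (m + 1)) one_pos
      fun τ ↦ ?_
    have h := ((hasSum_nat_add_iff' 1).mpr (hf τ)).div_const
      (Function.Periodic.qParam 1 (τ : ℂ))
    convert! h using 2 with m
    · have := hne τ
      simp only [smul_eq_mul]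
      field_simp
      ring
    · simp
  have hq : Tendsto (fun τ : ℍ ↦ Function.Periodic.qParam 1 (τ : ℂ)) atImInfty (𝓝 0) :=
    qParam_tendsto_atImInfty one_pos
  have h0 := (Filter.ZeroAtFilter.mul_boundedAtFilter (l := atImInfty) hq hbdd)
  have h1 := (Filter.Tendsto.add_const (c 0) h0)
  simp only [zero_add] at h1
  refine h1.congr fun τ ↦ ?_
  have := hne τ
  simp only [Pi.mul_apply]
  field_simp
  ring

/-- The derivative of a holomorphic function bounded at `i∞` vanishes at `i∞`. -/
lemma isZeroAtImInfty_normalizedDeriv {f : ℍ → ℂ} (hf : MDiff f) (hb : IsBoundedAtImInfty f) :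
    IsZeroAtImInfty (D f) := by
  obtain ⟨M, A, hM⟩ := isBoundedAtImInfty_iff.mp hb
  rw [UpperHalfPlane.mdifferentiable_iff] at hf
  refine isZeroAtImInfty_iff.mpr fun ε hε ↦ ⟨max A 1 + (|M| + 1) / ε, fun z hz ↦ ?_⟩
  have hR : 0 < (|M| + 1) / ε := by positivity
  have him (w : ℂ) (hw : w ∈ Metric.closedBall (z : ℂ) ((|M| + 1) / ε)) : max A 1 ≤ w.im := by
    have h := (Complex.abs_im_le_norm (w - z)).trans (mem_closedBall_iff_norm.mp hw)
    rw [Complex.sub_im, UpperHalfPlane.coe_im] at h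
    linarith [neg_le_of_abs_le h]
  have hpos (w : ℂ) (hw : w ∈ Metric.closedBall (z : ℂ) ((|M| + 1) / ε)) : 0 < w.im :=
    one_pos.trans_le ((le_max_right _ _).trans (him w hw))
  have hderiv : ‖deriv (f ∘ ofComplex) z‖ ≤ |M| / ((|M| + 1) / ε) := by
    refine Complex.norm_deriv_le_of_forall_mem_sphere_norm_le hR
      ((hf.mono fun w hw ↦ hpos w hw).diffContOnCl_ball subset_rfl) fun w hw ↦ ?_
    have hw' := Metric.sphere_subset_closedBall hw
    rw [Function.comp_apply, ofComplex_apply_of_im_pos (hpos w hw')]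
    exact (hM _ ((le_max_left _ _).trans (him w hw'))).trans (le_abs_self M)
  have hle : |M| / ((|M| + 1) / ε) ≤ ε := by
    rw [div_div_eq_mul_div, div_le_iff₀ (by positivity)]
    nlinarith [abs_nonneg M]
  have hc : ‖(2 * Real.pi * I : ℂ)⁻¹‖ ≤ 1 := by
    simp only [norm_inv, norm_mul, Complex.norm_I, Complex.norm_real, Real.norm_eq_abs,
      abs_of_pos Real.pi_pos, Complex.norm_ofNat, mul_one]
    exact inv_le_one_of_one_le₀ (by linarith [Real.pi_gt_three])
  rw [Derivative.normalizedDerivOfComplex, norm_mul]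
  exact (mul_le_of_le_one_left (norm_nonneg _) hc).trans (hderiv.trans hle)

lemma hasDerivAt_D2 (γ : SL(2, ℤ)) (z : ℍ) :
    HasDerivAt (EisensteinSeries.D2 γ ∘ ofComplex)
      (-(2 * Real.pi * I) * (γ 1 0 : ℂ) ^ 2 / denom γ z ^ 2) z := by
  have h := (hasDerivAt_denom_zpow (γ : GL (Fin 2) ℝ) (-1) z).const_mul
    (2 * Real.pi * I * (γ 1 0 : ℂ))
  have h' : HasDerivAt (EisensteinSeries.D2 γ ∘ ofComplex) _ (z : ℂ) :=
    h.congr_of_eventuallyEq (by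
      filter_upwards [isOpen_upperHalfPlaneSet.mem_nhds z.im_pos] with w hw
      simp [EisensteinSeries.D2, ofComplex_apply_of_im_pos hw, div_eq_mul_inv])
  convert h' using 1
  simp
  ring

/-- The quasimodular anomalies of `E₂ ^ 2` and `12 D E₂` cancel. -/
lemma E2_sq_sub_slash (γ : SL(2, ℤ)) :
    (fun z : ℍ ↦ EisensteinSeries.E2 z ^ 2 - 12 * D EisensteinSeries.E2 z) ∣[(4 : ℤ)] γ =
      fun z : ℍ ↦ EisensteinSeries.E2 z ^ 2 - 12 * D EisensteinSeries.E2 z := by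
  have hD2 : MDiff (EisensteinSeries.D2 γ) := fun z ↦
    UpperHalfPlane.mdifferentiableAt_iff.mpr (hasDerivAt_D2 γ z).differentiableAt
  ext z
  have h1 := congrFun (EisensteinSeries.E2_slash_action γ) z
  have h2 := congrFun (Derivative.normalizedDerivOfComplex_SL_slash (k := 2)
    E2_mdifferentiable (γ := γ)) z
  have h3 : D (EisensteinSeries.E2 ∣[(2 : ℤ)] γ) z = D EisensteinSeries.E2 z -
      (1 / (2 * riemannZeta 2)) * D (EisensteinSeries.D2 γ) z := by
    rw [EisensteinSeries.E2_slash_action, Derivative.normalizedDerivOfComplex_sub _ _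
      E2_mdifferentiable (hD2.const_smul _), Derivative.normalizedDerivOfComplex_smul _ _ hD2]
    rfl
  rw [h3] at h2
  simp only [Pi.sub_apply, h1] at h2
  simp only [Derivative.normalizedDerivOfComplex, (hasDerivAt_D2 γ z).deriv] at h2
  simp only [Pi.sub_apply, Pi.smul_apply, smul_eq_mul, ModularForm.SL_slash_apply,
    EisensteinSeries.D2, riemannZeta_two, Derivative.normalizedDerivOfComplex] at h1 h2 ⊢
  have hπ : (Real.pi : ℂ) ≠ 0 := ofReal_ne_zero.mpr Real.pi_ne_zero
  have hs : (2 * Real.pi * I : ℂ)⁻¹ = -I / (2 * Real.pi) := by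
    rw [inv_eq_iff_eq_inv, inv_div, neg_eq_neg_one_mul, eq_div_iff (by simp)]
    linear_combination (-2 * Real.pi : ℂ) * I_sq
  have hneg2 : denom γ z ^ (-2 : ℤ) = (denom γ z)⁻¹ ^ 2 := by rw [zpow_neg, inv_pow]; rfl
  have hneg4 : denom γ z ^ (-4 : ℤ) = (denom γ z)⁻¹ ^ 4 := by rw [zpow_neg, inv_pow]; rfl
  rw [show (-(2 + 2) : ℤ) = -4 by rfl, hneg4, hs] at h2
  rw [hneg2] at h1
  rw [hneg4, hs]
  push_cast at h2
  simp only [div_eq_mul_inv _ (denom γ z), div_eq_mul_inv _ (denom γ z ^ 2), ← inv_pow] at h1 h2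
  generalize (denom γ z)⁻¹ = j at *
  generalize deriv (EisensteinSeries.E2 ∘ ofComplex) (z : ℂ) = a at *
  generalize deriv (EisensteinSeries.E2 ∘ ofComplex) ((γ • z : ℍ) : ℂ) = b at *
  generalize EisensteinSeries.E2 (γ • z) = e' at *
  generalize EisensteinSeries.E2 z = e at *
  generalize ((γ 1 0 : ℤ) : ℂ) = c at *
  linear_combination (norm := skip) (e' * j ^ 2 + (e - 1 / (2 * (Real.pi ^ 2 / 6)) *
    (2 * Real.pi * I * c * j))) * h1 + 12 * h2
  field_simp
  ring

/-- The Ramanujan identity for the derivative of `E₂`. -/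
lemma ramanujan_E2 (z : ℍ) :
    12 * D EisensteinSeries.E2 z = EisensteinSeries.E2 z ^ 2 - ModularForm.E₄ z := by
  have hzero : IsZeroAtImInfty fun z : ℍ ↦ EisensteinSeries.E2 z ^ 2 -
      12 * D EisensteinSeries.E2 z - ModularForm.E₄ z := by
    have h2 : Tendsto EisensteinSeries.E2 atImInfty (𝓝 1) :=
      tendsto_atImInfty_of_hasSum_qExpansion
        (c := fun m ↦ if m = 0 then 1 else -24 * ArithmeticFunction.sigma 1 m) fun τ ↦ by
        simpa only [Function.Periodic.qParam, ofReal_one, div_one] using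
          EisensteinSeries.hasSum_qExpansion_E2 (z := τ)
    have h4 : Tendsto ModularForm.E₄ atImInfty (𝓝 1) := by
      have h := tendsto_atImInfty_of_hasSum_qExpansion fun τ ↦
        ModularForm.hasSum_qExpansion (h := 1) ModularForm.E₄ one_pos one_mem_strictPeriods_SL τ
      rwa [EisensteinSeries.E_qExpansion_coeff_zero _ ⟨2, rfl⟩] at h
    have hD := isZeroAtImInfty_normalizedDeriv E2_mdifferentiable
      EisensteinSeries.isBoundedAtImInfty_E2
    simpa [IsZeroAtImInfty, ZeroAtFilter] using ((h2.pow 2).sub (hD.const_mul 12)).sub h4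
  have hslash (γ : SL(2, ℤ)) : (fun z : ℍ ↦ EisensteinSeries.E2 z ^ 2 -
      12 * D EisensteinSeries.E2 z - ModularForm.E₄ z) ∣[(4 : ℤ)] γ =
      fun z : ℍ ↦ EisensteinSeries.E2 z ^ 2 - 12 * D EisensteinSeries.E2 z - ModularForm.E₄ z := by
    have h4 : (ModularForm.E₄ : ℍ → ℂ) ∣[(4 : ℤ)] γ = ModularForm.E₄ :=
      SlashInvariantForm.slash_action_eqn ModularForm.E₄ (γ : GL (Fin 2) ℝ)
        (Γ := 𝒮ℒ) (MonoidHom.mem_range.mpr ⟨γ, rfl⟩)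
    have h := congrArg₂ (· - ·) (E2_sq_sub_slash γ) h4
    simp only [sub_eq_add_neg, ← SlashAction.neg_slash, ← SlashAction.add_slash] at h
    exact h
  let f : CuspForm 𝒮ℒ 4 :=
    { toFun := fun z : ℍ ↦ EisensteinSeries.E2 z ^ 2 -
      12 * D EisensteinSeries.E2 z - ModularForm.E₄ z
      slash_action_eq' := fun _ ⟨γ, hγ⟩ ↦ hγ ▸ hslash γ
      holo' := ((E2_mdifferentiable.pow 2).sub (mdifferentiable_const.mul
        (Derivative.normalizedDerivOfComplex_mdifferentiable E2_mdifferentiable))).sub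
        ModularForm.E₄.holo'
      zero_at_cusps' := fun hc ↦ (OnePoint.isZeroAt_iff_forall_SL2Z hc).mpr fun γ _ ↦ by
        rw [hslash]; exact hzero }
  have := rank_zero_iff_forall_zero.mp
    (CuspForm.rank_eq_zero_of_weight_lt_twelve (k := 4) (by norm_num)) f
  have hfz : EisensteinSeries.E2 z ^ 2 - 12 * D EisensteinSeries.E2 z - ModularForm.E₄ z = 0 :=
    DFunLike.congr_fun this z
  linear_combination -hfz

lemma E4_eq (z : ℍ) : E4 z = ModularForm.E₄ z := by
  have hB : bernoulli 4 = -1 / 30 := by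
    rw [bernoulli_eq_bernoulli'_of_ne_one (by norm_num), bernoulli'_four]
  have h := EisensteinSeries.q_expansion_bernoulli (k := 4) (by norm_num) ⟨2, rfl⟩ z
  rw [ModularForm.E₄, h, hB, tsum_pnat_eq_tsum_succ (f := fun n : ℕ ↦
    (ArithmeticFunction.sigma (4 - 1) n : ℂ) * cexp (2 * Real.pi * Complex.I * z) ^ (n : ℤ)), E4]
  simp only [ArithmeticFunction.sigma_apply, qq]
  push_cast
  norm_num
  norm_cast

lemma dedekindEta_eq : dedekindEta = ModularForm.eta := by
  ext z
  simp only [dedekindEta, ModularForm.eta, qq, ModularForm.eta_q_eq_pow]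
  congr 2
  push_cast
  ring

/-- Klein–Hurwitz: `y = η⁻²` solves `y'' + (π²/36) E₄ y = 0` on the upper half-plane. -/
theorem klein_hurwitz (τ : ℂ) (hτ : 0 < τ.im) :
    iteratedDeriv 2 (fun z : ℂ => (dedekindEta z) ^ (-2 : ℤ)) τ +
      (Real.pi : ℂ) ^ 2 / 36 * E4 τ * (dedekindEta τ) ^ (-2 : ℤ) = 0 := by
  lift τ to ℍ using hτ
  have hη (z : ℍ) : ModularForm.eta z ≠ 0 := ModularForm.eta_ne_zero z.im_pos
  have hderiv (z : ℍ) : HasDerivAt (fun w : ℂ ↦ dedekindEta w ^ (-2 : ℤ))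
      (-(Real.pi * Complex.I / 6) * EisensteinSeries.E2 z * dedekindEta z ^ (-2 : ℤ)) z := by
    rw [dedekindEta_eq]
    have hd := (ModularForm.differentiableAt_eta_of_mem_upperHalfPlaneSet z.im_pos).hasDerivAt
    have hlog := ModularForm.logDeriv_eta_eq_E2 z
    rw [logDeriv_apply, div_eq_iff (hη z)] at hlog
    rw [hlog] at hd
    convert! (hasDerivAt_zpow (-2) _ (Or.inl (hη z))).comp (z : ℂ) hd using 1
    have := hη z
    rw [zpow_sub_one₀ this]
    push_cast
    field_simp
    ring
  have hev : deriv (fun w : ℂ ↦ dedekindEta w ^ (-2 : ℤ)) =ᶠ[𝓝 (τ : ℂ)] fun w ↦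
      -(Real.pi * Complex.I / 6) * (EisensteinSeries.E2 ∘ ofComplex) w *
        dedekindEta w ^ (-2 : ℤ) := by
    filter_upwards [isOpen_upperHalfPlaneSet.mem_nhds τ.im_pos] with w hw
    simpa [ofComplex_apply_of_im_pos hw] using (hderiv ⟨w, hw⟩).deriv
  have hE2 := (UpperHalfPlane.mdifferentiableAt_iff.mp (E2_mdifferentiable τ)).hasDerivAt
  have h2 := (hE2.const_mul (-(Real.pi * Complex.I / 6))).fun_mul (hderiv τ)
  rw [iteratedDeriv_succ, iteratedDeriv_one, hev.deriv_eq, h2.deriv, E4_eq]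
  have hR := ramanujan_E2 τ
  rw [normalizedDerivOfComplex] at hR
  have hE : deriv (EisensteinSeries.E2 ∘ ofComplex) τ = Real.pi * Complex.I / 6 *
      (EisensteinSeries.E2 τ ^ 2 - ModularForm.E₄ τ) := by
    rw [← hR]
    field_simp
    ring
  have hπ : (Real.pi : ℂ) ≠ 0 := Complex.ofReal_ne_zero.mpr Real.pi_ne_zero
  simp only [Function.comp_apply, ofComplex_apply, hE]
  linear_combination ((Real.pi : ℂ) ^ 2 / 36 * ModularForm.E₄ τ * dedekindEta τ ^ (-2 : ℤ)) * I_sq
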